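/- Let p be an odd prime and G a finite powerful p-group. Then for all i, j ≥ 1 the subgroup Ω_i(G^{p^j}) is powerfully nilpotent, and its powerful nilpotency class is at most i. -/

import Mathlib

/-!
Write `D n` for `G ^ (p ^ n)`. In a powerful `p`-group with `p` odd, `[D m, D n] ≤ D (m + n + 1)`
(`commutator_pPowerSeries`) and every element of `D n` is a `p ^ n`-th power
(`mem_pPowerSeries_iff`). Both rest on the class-two formula
`(x c) ^ p = x ^ p c ^ p d ^ (p choose 2)`, where `d` is the commutator of `x` and `c`, and on
`p ∣ p choose 2` for odd `p`.

The core is a pair of statements about element orders, proved together by induction on the order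
of `G` (`orderControlled_of_powerful`): elements of order dividing `p ^ i` are closed under
products, and `x ^ (p ^ a)` commutes with `y ^ (p ^ b)` whenever `x ^ (p ^ (a + b + 1)) = 1` and
`y ^ (p ^ (a + b)) = 1`. The second is shown by downward induction on `a + b`, using proper
powerful subgroups and the quotient by `Ω₁(G ^ p)`; the first follows from it. Factoring out
`Ω₁(G)` repeatedly yields the quantitative form `commutator_pow_pow_eq_one`.

For `Ω_i(D j)` with `j ≥ 1` consider the chain `H_0 = 1`, `H_m = Ω_{min(m + 1, i)}(D (i - m + j))`
for `1 ≤ m ≤ i`, so that `H_i = Ω_i(D j)`. A commutator of elements of `H_{m + 1}` and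
`Ω_i(D j)` has order dividing `p ^ m`, and lies in `D (i - m + j + 1)`, so it is the `p`-th power
of an element of `D (i - m + j)` whose order divides `p ^ (m + 1)`, that is, of an element of
`H_m`. The chain is therefore powerfully central of length `i`, and its last step shows that
`Ω_i(D j)` is powerful.
-/

/-- The subgroup generated by the `n`-th powers of the elements of `H`. -/
def subgroupPow {G : Type*} [Group G] (H : Subgroup G) (n : ℕ) : Subgroup G :=
  Subgroup.closure {x | ∃ h ∈ H, h ^ n = x}

/-- `Ω_i(H)`: the subgroup generated by the elements of `H` whose order divides `p ^ i`. -/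
def omegaSubgroup {G : Type*} [Group G] (p i : ℕ) (H : Subgroup G) : Subgroup G :=
  Subgroup.closure {x | x ∈ H ∧ x ^ p ^ i = 1}

/-- A finite `p`-group `G` is powerful if `[G,G] ≤ G^p` when `p` is odd,
and `[G,G] ≤ G^4` when `p = 2`. -/
def IsPowerful (p : ℕ) (G : Type*) [Group G] : Prop :=
  if p = 2 then commutator G ≤ subgroupPow (⊤ : Subgroup G) 4
  else commutator G ≤ subgroupPow (⊤ : Subgroup G) p

/-- The subgroup of `n`-th powers of the whole group is normal (indeed characteristic). -/
instance subgroupPow_top_normal {G : Type*} [Group G] (n : ℕ) :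
    (subgroupPow (⊤ : Subgroup G) n).Normal := by
  constructor
  intro x hx g
  have key : Subgroup.map (MulAut.conj g).toMonoidHom (subgroupPow (⊤ : Subgroup G) n)
      ≤ subgroupPow (⊤ : Subgroup G) n := by
    rw [subgroupPow, MonoidHom.map_closure]
    apply Subgroup.closure_le _ |>.mpr
    rintro y ⟨z, ⟨h, -, rfl⟩, rfl⟩
    exact Subgroup.subset_closure ⟨(MulAut.conj g) h, trivial, by
      simp [((MulAut.conj g).toMonoidHom.map_pow h n).symm]⟩
  have hmem : (MulAut.conj g) x ∈
      Subgroup.map (MulAut.conj g).toMonoidHom (subgroupPow (⊤ : Subgroup G) n) :=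
    Subgroup.mem_map_of_mem _ hx
  simpa [MulAut.conj_apply] using key hmem

/-- A powerfully central chain `{1} = H 0 ≤ H 1 ≤ ⋯ ≤ H n = G` of length `n`:
`[H (k+1), G] ≤ (H k)^p` for all `k < n`. -/
def IsPowerfullyCentralChain (p : ℕ) {G : Type*} [Group G] (n : ℕ) (H : ℕ → Subgroup G) : Prop :=
  H 0 = ⊥ ∧ H n = ⊤ ∧ (∀ k, k < n → H k ≤ H (k + 1)) ∧
    ∀ k, k < n → ⁅H (k + 1), (⊤ : Subgroup G)⁆ ≤ subgroupPow (H k) p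

/-- A group is powerfully nilpotent if it is powerful and admits a powerfully central chain. -/
def IsPowerfullyNilpotent (p : ℕ) (G : Type*) [Group G] : Prop :=
  IsPowerful p G ∧ ∃ (n : ℕ) (H : ℕ → Subgroup G), IsPowerfullyCentralChain p n H

/-- The powerful nilpotency class: the least possible length of a powerfully central chain. -/
noncomputable def powerfulNilpotencyClass (p : ℕ) (G : Type*) [Group G] : ℕ :=
  sInf {n | ∃ H : ℕ → Subgroup G, IsPowerfullyCentralChain p n H}


open scoped commutatorElement

/-! ### Commutators and powers -/

/-- To see that `[closure S, K] ≤ J` for a normal `J` it is enough to test generators of the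
first factor. -/
theorem commutator_closure_le {G : Type*} [Group G] {S : Set G} {K J : Subgroup G} [J.Normal]
    (h : ∀ s ∈ S, ∀ g ∈ K, ⁅s, g⁆ ∈ J) : ⁅Subgroup.closure S, K⁆ ≤ J := by
  rw [Subgroup.commutator_le]
  intro z hz g hg
  induction hz using Subgroup.closure_induction with
  | mem x hx => exact h x hx g hg
  | one => simp
  | mul a b _ _ ha hb =>
    have : ⁅a * b, g⁆ = a * ⁅b, g⁆ * a⁻¹ * ⁅a, g⁆ := by simp only [commutatorElement_def]; group
    rw [this]
    exact J.mul_mem (Subgroup.Normal.conj_mem ‹_› _ hb a) ha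
  | inv a _ ha =>
    have : ⁅a⁻¹, g⁆ = a⁻¹ * ⁅a, g⁆⁻¹ * a⁻¹⁻¹ := by simp only [commutatorElement_def]; group
    rw [this]
    exact Subgroup.Normal.conj_mem ‹_› _ (J.inv_mem ha) _

/-- In a nilpotent group, `X ≤ Y [X, G]` with `Y` normal forces `X ≤ Y`. -/
theorem le_of_le_sup_commutator {G : Type*} [Group G] [Group.IsNilpotent G] {X Y : Subgroup G}
    [Y.Normal] (h : X ≤ Y ⊔ ⁅X, (⊤ : Subgroup G)⁆) : X ≤ Y := by
  have key : ∀ n, X ≤ Y ⊔ (⊤ : Subgroup G).lowerCentralSeries n := by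
    intro n
    induction n with
    | zero => simp
    | succ n ih =>
      refine h.trans (sup_le le_sup_left ?_)
      refine (Subgroup.commutator_mono ih le_rfl).trans ?_
      rw [Subgroup.sup_eq_closure]
      refine commutator_closure_le ?_
      rintro s (hs | hs) g hg
      · refine Subgroup.mem_sup_left ?_
        have : ⁅s, g⁆ = s * (g * s⁻¹ * g⁻¹) := by simp only [commutatorElement_def]; group
        rw [this]
        exact Y.mul_mem hs (Subgroup.Normal.conj_mem ‹_› _ (Y.inv_mem hs) g)
      · exact Subgroup.mem_sup_right (Subgroup.commutator_mem_commutator hs hg)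
  obtain ⟨n, hn⟩ := Subgroup.nilpotent_iff_lowerCentralSeries.mp ‹Group.IsNilpotent G›
  have := key n
  rwa [hn, sup_bot_eq] at this

/-- The power formula in class two: if `c x = x c d` with `d` commuting with `x` and `c`, then
`(x c)^n = x^n c^n d^(n choose 2)`. -/
theorem mul_pow_of_class_two {G : Type*} [Group G] {x c d : G} (h : c * x = x * c * d)
    (hx : Commute d x) (hc : Commute d c) (n : ℕ) :
    (x * c) ^ n = x ^ n * c ^ n * d ^ n.choose 2 := by
  have hcn : ∀ n : ℕ, c ^ n * x = x * c ^ n * d ^ n := by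
    intro n
    induction n with
    | zero => simp
    | succ n ih =>
      calc c ^ (n + 1) * x = c * (c ^ n * x) := by rw [pow_succ']; group
        _ = (c * x) * c ^ n * d ^ n := by rw [ih]; group
        _ = x * c * (d * c ^ n) * d ^ n := by rw [h]; group
        _ = x * c * (c ^ n * d) * d ^ n := by rw [(hc.pow_right n).eq]
        _ = x * c ^ (n + 1) * d ^ (n + 1) := by rw [pow_succ' c, pow_succ' d]; group
  induction n with
  | zero => simp
  | succ n ih =>
    have e1 : Commute (d ^ n.choose 2) (x * c) := (hx.mul_right hc).pow_left _
    calc (x * c) ^ (n + 1) = x ^ n * c ^ n * (d ^ n.choose 2 * (x * c)) := by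
          rw [pow_succ, ih]; group
      _ = x ^ n * (c ^ n * x) * c * d ^ n.choose 2 := by rw [e1.eq]; group
      _ = x ^ n * x * c ^ n * (d ^ n * c) * d ^ n.choose 2 := by rw [hcn]; group
      _ = x ^ n * x * c ^ n * (c * d ^ n) * d ^ n.choose 2 := by rw [(hc.pow_left n).eq]
      _ = x ^ (n + 1) * c ^ (n + 1) * (d ^ n * d ^ n.choose 2) := by
          rw [pow_succ x, pow_succ c]; group
      _ = _ := by rw [← pow_add, Nat.choose_succ_succ' n 1, Nat.choose_one_right]

/-- For odd `p`, taking `p`-th powers is multiplicative on a pair whose commutator is central in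
the group they generate and of order dividing `p`: here `p ∣ p choose 2`. -/
theorem mul_pow_prime {G : Type*} [Group G] {p : ℕ} (hp : p.Prime) (hp2 : p ≠ 2) {x c d : G}
    (hd : ⁅c⁻¹, x⁻¹⁆ = d) (hx : Commute d x) (hc : Commute d c) (hdp : d ^ p = 1) :
    (x * c) ^ p = x ^ p * c ^ p := by
  have h : c * x = x * c * d := by rw [← hd]; simp only [commutatorElement_def]; group
  rw [mul_pow_of_class_two h hx hc]
  have h2 : 2 < p := lt_of_le_of_ne hp.two_le (Ne.symm hp2)
  obtain ⟨k, hk⟩ := hp.dvd_choose_self two_ne_zero h2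
  rw [hk, pow_mul, hdp, one_pow, mul_one]

theorem commute_mk_of_mem {G : Type*} [Group G] {J : Subgroup G} [J.Normal] {a b : G}
    (h : ⁅a, b⁆ ∈ J) : Commute (a : G ⧸ J) (b : G ⧸ J) := by
  rw [← commutatorElement_eq_one_iff_commute]
  exact (QuotientGroup.eq_one_iff ⁅a, b⁆).mpr h

theorem mem_of_commute_mk {G : Type*} [Group G] {J : Subgroup G} [J.Normal] {a b : G}
    (h : Commute (a : G ⧸ J) (b : G ⧸ J)) : ⁅a, b⁆ ∈ J := by
  rw [← commutatorElement_eq_one_iff_commute] at h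
  exact (QuotientGroup.eq_one_iff ⁅a, b⁆).mp h

/-- `mul_pow_prime` modulo a normal subgroup. -/
theorem mul_pow_prime_mod {G : Type*} [Group G] {p : ℕ} (hp : p.Prime) (hp2 : p ≠ 2)
    {J : Subgroup G} [J.Normal] {x c d : G} (hd : ⁅c⁻¹, x⁻¹⁆ = d)
    (hx : ⁅d, x⁆ ∈ J) (hc : ⁅d, c⁆ ∈ J) (hdp : d ^ p ∈ J) :
    (((x * c) ^ p : G) : G ⧸ J) = ((x ^ p * c ^ p : G) : G ⧸ J) := by
  have := mul_pow_prime (G := G ⧸ J) hp hp2 (x := x) (c := c) (d := d) (by rw [← hd]; rfl)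
    (commute_mk_of_mem hx) (commute_mk_of_mem hc)
    ((QuotientGroup.eq_one_iff (d ^ p)).mpr hdp)
  exact this

/-- If `c = [x⁻¹, g]`, so that `g x g⁻¹ = x c`, and the `p`-th power is multiplicative on the
pair `x, c` modulo `J`, with `c ^ p ∈ J`, then `[x ^ p, g] ∈ J`. -/
theorem commutator_pow_mem {G : Type*} [Group G] {p : ℕ} (hp : p.Prime) (hp2 : p ≠ 2)
    {J : Subgroup G} [J.Normal] {x g c d : G} (hc' : ⁅x⁻¹, g⁆ = c) (hd : ⁅c⁻¹, x⁻¹⁆ = d)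
    (hx : ⁅d, x⁆ ∈ J) (hc : ⁅d, c⁆ ∈ J) (hdp : d ^ p ∈ J) (hcp : c ^ p ∈ J) :
    ⁅x ^ p, g⁆ ∈ J := by
  have h1 := mul_pow_prime_mod hp hp2 hd hx hc hdp
  have h2 : x * c = g * x * g⁻¹ := by rw [← hc']; simp only [commutatorElement_def]; group
  have h3 : ((c ^ p : G) : G ⧸ J) = 1 := (QuotientGroup.eq_one_iff _).mpr hcp
  rw [QuotientGroup.mk_mul, h3, mul_one, h2, conj_pow] at h1
  apply mem_of_commute_mk
  have h4 : (g : G ⧸ J) * ((x ^ p : G) : G ⧸ J) * (g : G ⧸ J)⁻¹ = ((x ^ p : G) : G ⧸ J) := h1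
  exact (mul_inv_eq_iff_eq_mul.mp h4).symm

/-! ### Subgroups generated by powers -/

theorem pow_mem_subgroupPow {G : Type*} [Group G] {H : Subgroup G} {x : G} (n : ℕ) (hx : x ∈ H) :
    x ^ n ∈ subgroupPow H n :=
  Subgroup.subset_closure ⟨x, hx, rfl⟩

theorem subgroupPow_le {G : Type*} [Group G] (H : Subgroup G) (n : ℕ) : subgroupPow H n ≤ H := by
  rw [subgroupPow, Subgroup.closure_le]
  rintro _ ⟨h, hh, rfl⟩
  exact H.pow_mem hh n

theorem subgroupPow_mono {G : Type*} [Group G] {H K : Subgroup G} (h : H ≤ K) (n : ℕ) :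
    subgroupPow H n ≤ subgroupPow K n :=
  Subgroup.closure_mono fun _ ⟨x, hx, e⟩ => ⟨x, h hx, e⟩

theorem subgroupPow_map {G G' : Type*} [Group G] [Group G'] (f : G →* G') (H : Subgroup G)
    (n : ℕ) : (subgroupPow H n).map f = subgroupPow (H.map f) n := by
  rw [subgroupPow, subgroupPow, MonoidHom.map_closure]
  congr 1
  ext y
  constructor
  · rintro ⟨_, ⟨h, hh, rfl⟩, rfl⟩
    exact ⟨f h, Subgroup.mem_map_of_mem f hh, (map_pow f h n).symm⟩
  · rintro ⟨_, ⟨h, hh, rfl⟩, rfl⟩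
    exact ⟨h ^ n, ⟨h, hh, rfl⟩, map_pow f h n⟩

instance subgroupPow_normal {G : Type*} [Group G] (H : Subgroup G) [H.Normal] (n : ℕ) :
    (subgroupPow H n).Normal := by
  constructor
  intro x hx g
  have h1 := Subgroup.mem_map_of_mem (MulAut.conj g).toMonoidHom hx
  rw [subgroupPow_map] at h1
  refine subgroupPow_mono ?_ n h1
  rintro _ ⟨h, hh, rfl⟩
  exact Subgroup.Normal.conj_mem ‹_› h hh g

/-- A finite `p`-group generated by its `p`-th powers is trivial: otherwise `x ↦ x ^ p` would be
onto, hence injective, on its nontrivial abelianization. -/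
theorem subsingleton_of_subgroupPow_eq_top {G : Type*} [Group G] [Finite G] {p : ℕ}
    [hp : Fact p.Prime] (hG : IsPGroup p G) (h : subgroupPow (⊤ : Subgroup G) p = ⊤) :
    Subsingleton G := by
  by_contra hns
  rw [not_subsingleton_iff_nontrivial] at hns
  have := hG.isNilpotent
  have hlt : commutator G < ⊤ := Group.IsSolvable.commutator_lt_top_of_nontrivial G
  have hA : IsPGroup p (Abelianization G) := hG.to_quotient _
  have : Finite (Abelianization G) := inferInstanceAs (Finite (G ⧸ commutator G))
  have : Nontrivial (Abelianization G) :=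
    QuotientGroup.nontrivial_iff.mpr hlt.ne
  have hsurj : Function.Surjective (powMonoidHom p : Abelianization G →* Abelianization G) := by
    rw [← MonoidHom.range_eq_top, eq_top_iff]
    have h1 : (⊤ : Subgroup (Abelianization G)) = (⊤ : Subgroup G).map Abelianization.of := by
      rw [← MonoidHom.range_eq_map, eq_comm, MonoidHom.range_eq_top]
      exact QuotientGroup.mk_surjective
    rw [h1, ← h, subgroupPow, MonoidHom.map_closure, Subgroup.closure_le]
    rintro _ ⟨_, ⟨x, -, rfl⟩, rfl⟩
    exact ⟨Abelianization.of x, by simp⟩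
  have hinj := Finite.injective_iff_surjective.mpr hsurj
  have hdvd : p ∣ Nat.card (Abelianization G) := by
    rcases hA.card_eq_or_dvd with h1 | h1
    · exact absurd h1 Finite.one_lt_card.ne'
    · exact h1
  obtain ⟨x, hx⟩ := exists_prime_orderOf_dvd_card' p hdvd
  have h1 : x = 1 := hinj (by simp [← hx, pow_orderOf_eq_one])
  rw [h1, orderOf_one] at hx
  exact hp.out.one_lt.ne hx

/-- The `p`-th powers of a finite `p`-group lie in its Frattini subgroup, stated as: they are
non-generators. -/
theorem eq_top_of_sup_subgroupPow {G : Type*} [Group G] [Finite G] {p : ℕ}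
    [hp : Fact p.Prime] (hG : IsPGroup p G) {K : Subgroup G}
    (h : K ⊔ subgroupPow (⊤ : Subgroup G) p = ⊤) : K = ⊤ := by
  have := hG.isNilpotent
  rcases eq_top_or_exists_le_coatom K with h1 | ⟨M, hM, hKM⟩
  · exact h1
  exfalso
  have : M.Normal := Subgroup.NormalizerCondition.normal_of_coatom M
    Group.normalizerCondition_of_isNilpotent hM
  have hMtop : M ⊔ subgroupPow (⊤ : Subgroup G) p = ⊤ :=
    top_le_iff.mp (h.ge.trans (sup_le_sup_right hKM _))
  have hq : subgroupPow (⊤ : Subgroup (G ⧸ M)) p = ⊤ := by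
    have e : (⊤ : Subgroup G).map (QuotientGroup.mk' M) = ⊤ :=
      Subgroup.map_top_of_surjective _ (QuotientGroup.mk'_surjective M)
    rw [← e, ← subgroupPow_map]
    conv_rhs => rw [← hMtop]
    rw [Subgroup.map_sup, QuotientGroup.map_mk'_self, bot_sup_eq]
  have := subsingleton_of_subgroupPow_eq_top (hG.to_quotient M) hq
  exact hM.1 (QuotientGroup.subgroup_eq_top_of_subsingleton M this)

/-! ### The power series of a powerful group -/

/-- The iterated power series `D 0 = G`, `D (n + 1) = (D n) ^ p`. In a powerful group
`D n = G ^ (p ^ n)`, see `subgroupPow_eq_powerSeries`. -/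
def pPowerSeries (p : ℕ) (G : Type*) [Group G] : ℕ → Subgroup G
  | 0 => ⊤
  | n + 1 => subgroupPow (pPowerSeries p G n) p

instance pPowerSeries_normal (p : ℕ) (G : Type*) [Group G] (n : ℕ) :
    (pPowerSeries p G n).Normal := by
  induction n with
  | zero => exact inferInstanceAs (⊤ : Subgroup G).Normal
  | succ n ih => exact subgroupPow_normal _ _

theorem pPowerSeries_antitone (p : ℕ) (G : Type*) [Group G] : Antitone (pPowerSeries p G) :=
  antitone_nat_of_succ_le fun _ => subgroupPow_le _ _

theorem pow_mem_pPowerSeries_succ {p : ℕ} {G : Type*} [Group G] {n : ℕ} {x : G}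
    (hx : x ∈ pPowerSeries p G n) : x ^ p ∈ pPowerSeries p G (n + 1) :=
  pow_mem_subgroupPow p hx

theorem pow_mem_pPowerSeries (p : ℕ) {G : Type*} [Group G] (n : ℕ) (x : G) :
    x ^ p ^ n ∈ pPowerSeries p G n := by
  induction n with
  | zero => exact Subgroup.mem_top _
  | succ n ih =>
    rw [pow_succ, pow_mul]
    exact pow_mem_pPowerSeries_succ ih

/-- If `N` is powerfully embedded in `G`, i.e. `[N, G] ≤ N ^ p`, then so is `N ^ p`. Modulo
`J = (N ^ p) ^ p [N ^ p, G, G]` the elements `x ∈ N` and `[x, g]` generate a group of class two,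
whence `[x ^ p, g] ∈ J`; nilpotency of `G` removes the second factor of `J`. -/
theorem powerfully_embedded_pow {G : Type*} [Group G] [Group.IsNilpotent G] {p : ℕ}
    (hp : p.Prime) (hp2 : p ≠ 2) {N : Subgroup G} [N.Normal]
    (h : ⁅N, (⊤ : Subgroup G)⁆ ≤ subgroupPow N p) :
    ⁅subgroupPow N p, (⊤ : Subgroup G)⁆ ≤ subgroupPow (subgroupPow N p) p := by
  apply le_of_le_sup_commutator
  set X : Subgroup G := ⁅subgroupPow N p, (⊤ : Subgroup G)⁆ with hX
  conv_lhs => rw [hX, subgroupPow]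
  refine commutator_closure_le ?_
  rintro _ ⟨x, hx, rfl⟩ g -
  have hc : ⁅x⁻¹, g⁆ ∈ subgroupPow N p :=
    h (Subgroup.commutator_mem_commutator (N.inv_mem hx) (Subgroup.mem_top g))
  have hd : ⁅⁅x⁻¹, g⁆⁻¹, x⁻¹⁆ ∈ X :=
    Subgroup.commutator_mem_commutator (Subgroup.inv_mem _ hc) (Subgroup.mem_top _)
  have hdN : ⁅⁅x⁻¹, g⁆⁻¹, x⁻¹⁆ ∈ subgroupPow N p :=
    h (Subgroup.commutator_mono (subgroupPow_le N p) le_rfl hd)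
  exact commutator_pow_mem hp hp2 rfl rfl
    (Subgroup.mem_sup_right (Subgroup.commutator_mem_commutator hd (Subgroup.mem_top _)))
    (Subgroup.mem_sup_right (Subgroup.commutator_mem_commutator hd (Subgroup.mem_top _)))
    (Subgroup.mem_sup_left (pow_mem_subgroupPow p hdN))
    (Subgroup.mem_sup_left (pow_mem_subgroupPow p hc))

theorem powerful_quotient {G : Type*} [Group G] {p : ℕ}
    (hpow : commutator G ≤ subgroupPow ⊤ p) (N : Subgroup G) [N.Normal] :
    commutator (G ⧸ N) ≤ subgroupPow ⊤ p := by
  have e : (⊤ : Subgroup G).map (QuotientGroup.mk' N) = ⊤ :=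
    Subgroup.map_top_of_surjective _ (QuotientGroup.mk'_surjective N)
  rw [commutator_def, ← e, ← Subgroup.map_commutator, ← subgroupPow_map]
  exact Subgroup.map_mono hpow

/-- A subgroup `H` with `[H, H] ≤ H ^ p`, computed in `G`, is powerful as a group. -/
theorem powerful_of_commutator_le {G : Type*} [Group G] {p : ℕ} {H : Subgroup G}
    (h : ⁅H, H⁆ ≤ subgroupPow H p) :
    commutator H ≤ subgroupPow ⊤ p := by
  rw [← Subgroup.map_le_map_iff_of_injective (Subgroup.subtype_injective H), subgroupPow_map,
    commutator_def, Subgroup.map_commutator, ← MonoidHom.range_eq_map, Subgroup.range_subtype]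
  exact h

section powerful

variable {G : Type*} [Group G] [Finite G] {p : ℕ} [hp : Fact p.Prime]

theorem commutator_pPowerSeries_top (hp2 : p ≠ 2) (hG : IsPGroup p G)
    (hpow : commutator G ≤ subgroupPow ⊤ p) (n : ℕ) :
    ⁅pPowerSeries p G n, (⊤ : Subgroup G)⁆ ≤ pPowerSeries p G (n + 1) := by
  have := hG.isNilpotent
  induction n with
  | zero => exact hpow
  | succ n ih => exact powerfully_embedded_pow hp.out hp2 ih

theorem commutator_mem_pPowerSeries_succ (hp2 : p ≠ 2) (hG : IsPGroup p G)
    (hpow : commutator G ≤ subgroupPow ⊤ p) {n : ℕ} {x : G} (hx : x ∈ pPowerSeries p G n) (g : G) :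
    ⁅x, g⁆ ∈ pPowerSeries p G (n + 1) :=
  commutator_pPowerSeries_top hp2 hG hpow n
    (Subgroup.commutator_mem_commutator hx (Subgroup.mem_top g))

theorem commutator_pPowerSeries (hp2 : p ≠ 2) (hG : IsPGroup p G)
    (hpow : commutator G ≤ subgroupPow ⊤ p) (m n : ℕ) :
    ⁅pPowerSeries p G m, pPowerSeries p G n⁆ ≤ pPowerSeries p G (m + n + 1) := by
  induction m with
  | zero =>
    rw [Subgroup.commutator_comm, Nat.zero_add]
    exact commutator_pPowerSeries_top hp2 hG hpow n
  | succ m ih =>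
    conv_lhs => rw [pPowerSeries, subgroupPow]
    refine commutator_closure_le ?_
    rintro _ ⟨x, hx, rfl⟩ y hy
    have hc : ⁅x⁻¹, y⁆ ∈ pPowerSeries p G (m + n + 1) :=
      ih (Subgroup.commutator_mem_commutator (Subgroup.inv_mem _ hx) hy)
    have e : m + 1 + n + 1 = m + n + 1 + 1 := by ring
    rw [e]
    have hd : ⁅⁅x⁻¹, y⁆⁻¹, x⁻¹⁆ ∈ pPowerSeries p G (m + n + 1 + 1) :=
      commutator_mem_pPowerSeries_succ hp2 hG hpow (Subgroup.inv_mem _ hc) _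
    have hle := pPowerSeries_antitone p G (Nat.le_succ (m + n + 1 + 1))
    exact commutator_pow_mem hp.out hp2 rfl rfl
      (hle (commutator_mem_pPowerSeries_succ hp2 hG hpow hd _))
      (hle (commutator_mem_pPowerSeries_succ hp2 hG hpow hd _))
      (Subgroup.pow_mem _ hd p) (pow_mem_pPowerSeries_succ hc)

/-- `(x v) ^ p ≡ x ^ p v ^ p` modulo `D (m + 2)` for `v ∈ D m`. -/
theorem mul_pow_mod_pPowerSeries (hp2 : p ≠ 2) (hG : IsPGroup p G)
    (hpow : commutator G ≤ subgroupPow ⊤ p) {m : ℕ} (x : G) {v : G}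
    (hv : v ∈ pPowerSeries p G m) :
    (((x * v) ^ p : G) : G ⧸ pPowerSeries p G (m + 2)) =
      ((x ^ p * v ^ p : G) : G ⧸ pPowerSeries p G (m + 2)) := by
  have hd : ⁅v⁻¹, x⁻¹⁆ ∈ pPowerSeries p G (m + 1) :=
    commutator_mem_pPowerSeries_succ hp2 hG hpow (Subgroup.inv_mem _ hv) _
  exact mul_pow_prime_mod hp.out hp2 rfl (commutator_mem_pPowerSeries_succ hp2 hG hpow hd _)
    (commutator_mem_pPowerSeries_succ hp2 hG hpow hd _) (pow_mem_pPowerSeries_succ hd)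

/-- Every element of `D (m + 1)` is the `p`-th power of an element of `D m`, modulo
`D (m + 2)`. -/
theorem exists_pow_mod (hp2 : p ≠ 2) (hG : IsPGroup p G)
    (hpow : commutator G ≤ subgroupPow ⊤ p) {m : ℕ} {z : G}
    (hz : z ∈ pPowerSeries p G (m + 1)) :
    ∃ v ∈ pPowerSeries p G m, ((v ^ p : G) : G ⧸ pPowerSeries p G (m + 2)) = z := by
  rw [pPowerSeries, subgroupPow] at hz
  induction hz using Subgroup.closure_induction with
  | mem z hz =>
    obtain ⟨v, hv, rfl⟩ := hz
    exact ⟨v, hv, rfl⟩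
  | one => exact ⟨1, Subgroup.one_mem _, by rw [one_pow]⟩
  | mul a b _ _ ha hb =>
    obtain ⟨v, hv, ev⟩ := ha
    obtain ⟨w, hw, ew⟩ := hb
    refine ⟨v * w, Subgroup.mul_mem _ hv hw, ?_⟩
    rw [mul_pow_mod_pPowerSeries hp2 hG hpow v hw, QuotientGroup.mk_mul, ev, ew]
    rfl
  | inv a _ ha =>
    obtain ⟨v, hv, ev⟩ := ha
    refine ⟨v⁻¹, Subgroup.inv_mem _ hv, ?_⟩
    rw [inv_pow, QuotientGroup.mk_inv, ev]
    rfl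

/-- The power series becomes constant, and a `p`-group equal to its own `p`-th power subgroup is
trivial. -/
theorem exists_pPowerSeries_eq_bot (hG : IsPGroup p G) : ∃ N, pPowerSeries p G N = ⊥ := by
  obtain ⟨N, hN⟩ := WellFoundedGT.monotone_chain_condition
    (α := (Subgroup G)ᵒᵈ) ⟨fun n => OrderDual.toDual (pPowerSeries p G n),
      fun a b h => pPowerSeries_antitone p G h⟩
  refine ⟨N, ?_⟩
  have h1 : pPowerSeries p G N = subgroupPow (pPowerSeries p G N) p :=
    hN (N + 1) (Nat.le_succ N)
  have h2 : subgroupPow (⊤ : Subgroup (pPowerSeries p G N)) p = ⊤ := by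
    apply Subgroup.map_injective (Subgroup.subtype_injective (pPowerSeries p G N))
    rw [subgroupPow_map, ← MonoidHom.range_eq_map, Subgroup.range_subtype, ← h1]
  have := subsingleton_of_subgroupPow_eq_top (hG.to_subgroup (pPowerSeries p G N)) h2
  exact Subgroup.eq_bot_of_subsingleton _

/-- Every element of `D (n + 1)` is the `p`-th power of an element of `D n`: improve the
approximate root of `exists_pow_mod` until the error lies in `D N = 1`. -/
theorem exists_pow_eq (hp2 : p ≠ 2) (hG : IsPGroup p G)
    (hpow : commutator G ≤ subgroupPow ⊤ p) {n : ℕ} {z : G}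
    (hz : z ∈ pPowerSeries p G (n + 1)) : ∃ x ∈ pPowerSeries p G n, x ^ p = z := by
  have key : ∀ k, ∃ x ∈ pPowerSeries p G n, (x ^ p)⁻¹ * z ∈ pPowerSeries p G (n + k + 1) := by
    intro k
    induction k with
    | zero => exact ⟨1, Subgroup.one_mem _, by simpa using hz⟩
    | succ k ih =>
      obtain ⟨x, hx, hu⟩ := ih
      obtain ⟨v, hv, ev⟩ := exists_pow_mod hp2 hG hpow hu
      refine ⟨x * v, Subgroup.mul_mem _ hx (pPowerSeries_antitone p G (Nat.le_add_right n k) hv),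
        ?_⟩
      have e := mul_pow_mod_pPowerSeries hp2 hG hpow x hv
      rw [QuotientGroup.mk_mul, ev, ← QuotientGroup.mk_mul, mul_inv_cancel_left] at e
      exact QuotientGroup.eq.mp e
  obtain ⟨N, hN⟩ := exists_pPowerSeries_eq_bot (p := p) hG
  obtain ⟨x, hx, hu⟩ := key N
  have h1 := pPowerSeries_antitone p G (show N ≤ n + N + 1 by omega) hu
  rw [hN, Subgroup.mem_bot] at h1
  exact ⟨x, hx, inv_mul_eq_one.mp h1⟩

theorem mem_pPowerSeries_iff (hp2 : p ≠ 2) (hG : IsPGroup p G)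
    (hpow : commutator G ≤ subgroupPow ⊤ p) {n : ℕ} {z : G} :
    z ∈ pPowerSeries p G n ↔ ∃ x : G, x ^ p ^ n = z := by
  constructor
  · intro hz
    induction n generalizing z with
    | zero => exact ⟨z, by simp⟩
    | succ n ih =>
      obtain ⟨x, hx, rfl⟩ := exists_pow_eq hp2 hG hpow hz
      obtain ⟨y, rfl⟩ := ih hx
      exact ⟨y, by rw [pow_succ, pow_mul]⟩
  · rintro ⟨x, rfl⟩
    exact pow_mem_pPowerSeries p n x

theorem subgroupPow_eq_powerSeries (hp2 : p ≠ 2) (hG : IsPGroup p G)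
    (hpow : commutator G ≤ subgroupPow ⊤ p) (n : ℕ) :
    subgroupPow (⊤ : Subgroup G) (p ^ n) = pPowerSeries p G n := by
  apply le_antisymm
  · rw [subgroupPow, Subgroup.closure_le]
    rintro _ ⟨x, -, rfl⟩
    exact pow_mem_pPowerSeries p n x
  · intro z hz
    obtain ⟨x, rfl⟩ := (mem_pPowerSeries_iff hp2 hG hpow).mp hz
    exact pow_mem_subgroupPow _ (Subgroup.mem_top x)

/-- `⟨y, G ^ p⟩` is powerful: its derived subgroup lies in `[G ^ p, G] ≤ (G ^ p) ^ p`. -/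
theorem powerful_zpowers_sup (hp2 : p ≠ 2) (hG : IsPGroup p G)
    (hpow : commutator G ≤ subgroupPow ⊤ p) (y : G) :
    commutator ↥(Subgroup.zpowers y ⊔ pPowerSeries p G 1) ≤ subgroupPow ⊤ p := by
  apply powerful_of_commutator_le
  refine le_trans ?_ (subgroupPow_mono le_sup_right p : pPowerSeries p G 2 ≤ _)
  have h1 : ⁅pPowerSeries p G 1, (⊤ : Subgroup G)⁆ ≤ pPowerSeries p G 2 :=
    commutator_pPowerSeries_top hp2 hG hpow 1
  have hy : ⁅Subgroup.zpowers y ⊔ pPowerSeries p G 1, Subgroup.zpowers y⁆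
      ≤ pPowerSeries p G 2 := by
    rw [Subgroup.sup_eq_closure]
    refine commutator_closure_le ?_
    rintro s (hs | hs) g hg
    · obtain ⟨k, rfl⟩ := hs
      obtain ⟨l, rfl⟩ := hg
      have : Commute (y ^ k) (y ^ l) := (Commute.refl y).zpow_zpow k l
      simp only [commutatorElement_eq_one_iff_commute.mpr this, Subgroup.one_mem]
    · exact h1 (Subgroup.commutator_mem_commutator hs (Subgroup.mem_top g))
  conv_lhs => enter [1]; rw [Subgroup.sup_eq_closure]
  refine commutator_closure_le ?_
  rintro s (hs | hs) g hg
  · rw [Subgroup.commutator_comm] at hy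
    exact hy (Subgroup.commutator_mem_commutator hs hg)
  · exact h1 (Subgroup.commutator_mem_commutator hs (Subgroup.mem_top g))

end powerful

/-! ### Elements of bounded order -/

/-- The two facts about element orders proved by simultaneous induction on the order of the
group: elements of order dividing `p ^ i` are closed under products, and
`[x ^ (p ^ a), y ^ (p ^ b)] = 1` as soon as `x ^ (p ^ (a + b + 1)) = 1` and
`y ^ (p ^ (a + b)) = 1`. -/
def OrderControlled (p : ℕ) (G : Type*) [Group G] : Prop :=
  (∀ i (x y : G), x ^ p ^ i = 1 → y ^ p ^ i = 1 → (x * y) ^ p ^ i = 1) ∧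
  (∀ a b (x y : G), x ^ p ^ (a + b + 1) = 1 → y ^ p ^ (a + b) = 1 →
    Commute (x ^ p ^ a) (y ^ p ^ b))

theorem pow_eq_one_of_mem_omega {G : Type*} [Group G] {p i : ℕ}
    (hG : ∀ x y : G, x ^ p ^ i = 1 → y ^ p ^ i = 1 → (x * y) ^ p ^ i = 1) {H : Subgroup G} {z : G}
    (hz : z ∈ omegaSubgroup p i H) : z ^ p ^ i = 1 := by
  rw [omegaSubgroup] at hz
  induction hz using Subgroup.closure_induction with
  | mem x hx => exact hx.2
  | one => exact one_pow _
  | mul a b _ _ ha hb => exact hG a b ha hb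
  | inv a _ ha => rw [inv_pow, ha, inv_one]

theorem omegaSubgroup_le {G : Type*} [Group G] (p i : ℕ) (H : Subgroup G) :
    omegaSubgroup p i H ≤ H := by
  rw [omegaSubgroup, Subgroup.closure_le]
  exact fun x hx => hx.1

instance omegaSubgroup_normal {G : Type*} [Group G] (p i : ℕ) (H : Subgroup G) [H.Normal] :
    (omegaSubgroup p i H).Normal := by
  constructor
  intro x hx g
  have h1 := Subgroup.mem_map_of_mem (MulAut.conj g).toMonoidHom hx
  rw [omegaSubgroup, MonoidHom.map_closure] at h1
  refine Subgroup.closure_mono ?_ h1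
  rintro _ ⟨y, ⟨hy, hyp⟩, rfl⟩
  refine ⟨Subgroup.Normal.conj_mem ‹_› y hy g, ?_⟩
  rw [← map_pow, hyp, map_one]

theorem card_quotient_lt {G : Type*} [Group G] [Finite G] {N : Subgroup G} [N.Normal]
    (hN : N ≠ ⊥) : Nat.card (G ⧸ N) < Nat.card G := by
  have h1 : 1 < Nat.card N := by
    rw [Finite.one_lt_card_iff_nontrivial]
    exact (Subgroup.nontrivial_iff_ne_bot N).mpr hN
  rw [Subgroup.card_eq_card_quotient_mul_card_subgroup N]
  exact lt_mul_of_one_lt_right Nat.card_pos h1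

theorem card_subgroup_lt {G : Type*} [Group G] [Finite G] {H : Subgroup G} (hH : H ≠ ⊤) :
    Nat.card H < Nat.card G :=
  lt_of_le_of_ne (Subgroup.card_le_card_group H) fun h => hH (Subgroup.eq_top_of_card_eq H h)

theorem omegaSubgroup_one_ne_bot {G : Type*} [Group G] [Finite G] {p : ℕ} [hp : Fact p.Prime]
    (hG : IsPGroup p G) {H : Subgroup G} (hH : H ≠ ⊥) : omegaSubgroup p 1 H ≠ ⊥ := by
  have hnt : Nontrivial H := (Subgroup.nontrivial_iff_ne_bot H).mpr hH
  have hdvd : p ∣ Nat.card H :=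
    (hG.to_subgroup H).card_eq_or_dvd.resolve_left Finite.one_lt_card.ne'
  obtain ⟨x, hx⟩ := exists_prime_orderOf_dvd_card' p hdvd
  intro hbot
  have h1 : (x : G) ∈ omegaSubgroup p 1 H := Subgroup.subset_closure
    ⟨x.2, by rw [pow_one, ← hx, ← Subgroup.orderOf_coe, pow_orderOf_eq_one]⟩
  rw [hbot, Subgroup.mem_bot] at h1
  rw [← Subgroup.orderOf_coe, h1, orderOf_one] at hx
  exact hp.out.one_lt.ne hx

section step

variable {G : Type*} [Group G] [Finite G] {p : ℕ} [hp : Fact p.Prime]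

/-- In a nonabelian powerful group `y ^ (p ^ i) = 1` implies `[y, g] ^ (p ^ i) = 1`: both `y` and
its conjugate lie in the proper powerful subgroup `⟨y, G ^ p⟩`. -/
theorem commutator_pow_eq_one (hp2 : p ≠ 2) (hG : IsPGroup p G)
    (hpow : commutator G ≤ subgroupPow ⊤ p) (hnc : ¬ ∀ a b : G, a * b = b * a)
    (ihs : ∀ H : Subgroup G, H ≠ ⊤ → commutator H ≤ subgroupPow ⊤ p → OrderControlled p H)
    {i : ℕ} {y : G} (hy : y ^ p ^ i = 1) (g : G) : ⁅y, g⁆ ^ p ^ i = 1 := by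
  set H : Subgroup G := Subgroup.zpowers y ⊔ pPowerSeries p G 1 with hH
  have hne : H ≠ ⊤ := by
    intro htop
    have h1 : Subgroup.zpowers y = ⊤ := eq_top_of_sup_subgroupPow hG htop
    apply hnc
    intro a b
    have ha : a ∈ Subgroup.zpowers y := h1 ▸ Subgroup.mem_top a
    have hb : b ∈ Subgroup.zpowers y := h1 ▸ Subgroup.mem_top b
    obtain ⟨k, rfl⟩ := ha
    obtain ⟨l, rfl⟩ := hb
    exact ((Commute.refl y).zpow_zpow k l).eq
  have hyH : y ∈ H := Subgroup.mem_sup_left (Subgroup.mem_zpowers y)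
  have hcH : ⁅y, g⁆ ∈ H := Subgroup.mem_sup_right
    (commutator_mem_pPowerSeries_succ (n := 0) hp2 hG hpow (Subgroup.mem_top y) g)
  have e : ⁅y, g⁆ = y * (g * y⁻¹ * g⁻¹) := by simp only [commutatorElement_def]; group
  have hzH : g * y⁻¹ * g⁻¹ ∈ H := by
    have := H.mul_mem (H.inv_mem hyH) hcH
    rwa [e, inv_mul_cancel_left] at this
  have h := (ihs H hne (powerful_zpowers_sup hp2 hG hpow y)).1 i ⟨y, hyH⟩ ⟨_, hzH⟩
    (Subtype.ext hy) (Subtype.ext (by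
      simp only [Subgroup.coe_pow, Subgroup.coe_one]
      rw [conj_pow, inv_pow, hy]; simp))
  rw [e]
  exact congrArg Subtype.val h

/-- The commutation half of `OrderControlled`, by downward induction on `I = a + b`. For large
`I` the commutator lies in `D (I + 1) = 1`, and `a = 0` is trivial. Otherwise put `w = x ^ (p ^ (a - 1))`,
`v = y ^ (p ^ b)` and `c = [w⁻¹, v]`. Then `c ^ p = 1`, and `d = [c⁻¹, w⁻¹]` is a `p ^ (I + 1)`-th
power of order dividing `p`, so by the case `I + 1` it commutes with `w` and `c`. Hence
`v w ^ p v⁻¹ = (w c) ^ p = w ^ p`. -/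
theorem commute_pow_step (hp2 : p ≠ 2) (hG : IsPGroup p G)
    (hpow : commutator G ≤ subgroupPow ⊤ p) (hnc : ¬ ∀ a b : G, a * b = b * a)
    (ihs : ∀ H : Subgroup G, H ≠ ⊤ → commutator H ≤ subgroupPow ⊤ p → OrderControlled p H)
    (ihq : ∀ N : Subgroup G, ∀ _ : N.Normal, N ≠ ⊥ → OrderControlled p (G ⧸ N)) :
    ∀ a b (x y : G), x ^ p ^ (a + b + 1) = 1 → y ^ p ^ (a + b) = 1 →
      Commute (x ^ p ^ a) (y ^ p ^ b) := by
  obtain ⟨N, hN⟩ := exists_pPowerSeries_eq_bot (p := p) hG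
  have hcomm : ∀ {m n : ℕ} {u v : G}, u ∈ pPowerSeries p G m → v ∈ pPowerSeries p G n →
      ⁅u, v⁆ ∈ pPowerSeries p G (m + n + 1) := fun hu hv =>
    commutator_pPowerSeries hp2 hG hpow _ _ (Subgroup.commutator_mem_commutator hu hv)
  have hord : ∀ {i : ℕ} {y : G}, y ^ p ^ i = 1 → ∀ g : G, ⁅y, g⁆ ^ p ^ i = 1 :=
    fun hy g => commutator_pow_eq_one hp2 hG hpow hnc ihs hy g
  -- `G` is nonabelian, so `G ^ p` is neither trivial nor all of `G`.
  have hD1bot : pPowerSeries p G 1 ≠ ⊥ := by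
    intro h
    apply hnc
    intro a b
    have h1 := commutator_mem_pPowerSeries_succ (n := 0) hp2 hG hpow (Subgroup.mem_top a) b
    rw [h, Subgroup.mem_bot, commutatorElement_eq_one_iff_mul_comm] at h1
    exact h1
  have hD1top : pPowerSeries p G 1 ≠ ⊤ := by
    intro h
    have := subsingleton_of_subgroupPow_eq_top hG h
    exact hnc fun a b => Subsingleton.elim _ _
  have hD1 : OrderControlled p (pPowerSeries p G 1) := by
    refine ihs _ hD1top (powerful_of_commutator_le ?_)
    exact (Subgroup.commutator_mono le_rfl le_top).trans
      (commutator_pPowerSeries_top hp2 hG hpow 1)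
  -- `E = Ω₁(G ^ p)` has exponent dividing `p` because `G ^ p` is a smaller powerful group.
  set E := omegaSubgroup p 1 (pPowerSeries p G 1) with hE
  have hEp : ∀ z ∈ E, z ^ p = 1 := by
    intro z hz
    have h0 : ∀ z ∈ E, ∃ hz : z ∈ pPowerSeries p G 1,
        (⟨z, hz⟩ : pPowerSeries p G 1) ^ p ^ 1 = 1 := by
      intro z hz
      rw [hE, omegaSubgroup] at hz
      induction hz using Subgroup.closure_induction with
      | mem x hx => exact ⟨hx.1, Subtype.ext hx.2⟩
      | one => exact ⟨Subgroup.one_mem _, one_pow _⟩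
      | mul a b _ _ ha hb =>
        obtain ⟨ha1, ha⟩ := ha
        obtain ⟨hb1, hb⟩ := hb
        exact ⟨Subgroup.mul_mem _ ha1 hb1, hD1.1 1 ⟨a, ha1⟩ ⟨b, hb1⟩ ha hb⟩
      | inv a _ ha =>
        obtain ⟨ha1, ha⟩ := ha
        refine ⟨Subgroup.inv_mem _ ha1, ?_⟩
        have : (⟨a⁻¹, Subgroup.inv_mem _ ha1⟩ : pPowerSeries p G 1) = ⟨a, ha1⟩⁻¹ := rfl
        rw [this, inv_pow, ha, inv_one]
    obtain ⟨hz1, h⟩ := h0 z hz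
    rw [pow_one] at h
    exact congrArg Subtype.val h
  have hEq : OrderControlled p (G ⧸ E) := ihq E inferInstance (omegaSubgroup_one_ne_bot hG hD1bot)
  have hmemE : ∀ {k : ℕ} {x : G}, x ^ p ^ (k + 1 + 1) = 1 → x ^ p ^ (k + 1) ∈ E := by
    intro k x hx
    refine Subgroup.subset_closure ⟨?_, ?_⟩
    · exact pPowerSeries_antitone p G (by omega) (pow_mem_pPowerSeries p (k + 1) x)
    · rw [← pow_mul, ← pow_add]; exact hx
  suffices H : ∀ k a b, N ≤ a + b + k → ∀ x y : G, x ^ p ^ (a + b + 1) = 1 →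
      y ^ p ^ (a + b) = 1 → Commute (x ^ p ^ a) (y ^ p ^ b) from
    fun a b => H N a b (Nat.le_add_left _ _)
  intro k
  induction k with
  | zero =>
    intro a b hab x y _ _
    have h1 := hcomm (pow_mem_pPowerSeries p a x) (pow_mem_pPowerSeries p b y)
    have h2 := pPowerSeries_antitone p G (show N ≤ a + b + 1 by omega) h1
    rwa [hN, Subgroup.mem_bot, commutatorElement_eq_one_iff_commute] at h2
  | succ k ih =>
    intro a b hab x y hx hy
    rcases a with _ | a
    · rw [Nat.zero_add] at hy
      rw [hy]
      exact Commute.one_right _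
    set w := x ^ p ^ a with hw
    set v := y ^ p ^ b with hv
    set c := ⁅w⁻¹, v⁆ with hc
    have hcp : c ^ p = 1 := by
      rcases Nat.eq_zero_or_pos (a + b) with h0 | h0
      · obtain ⟨rfl, rfl⟩ : a = 0 ∧ b = 0 := by omega
        have h1 : v ^ p ^ 1 = 1 := by
          rw [hv, pow_zero, pow_one]
          simpa using hy
        have h2 := hord h1 w⁻¹
        rw [← commutatorElement_inv, inv_pow, inv_eq_one, pow_one] at h2
        exact h2
      · obtain ⟨m, hm⟩ : ∃ m, a + b = m + 1 := ⟨a + b - 1, by omega⟩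
        have h1 : x ^ p ^ (a + b + 1) ∈ E := hmemE (by
          rw [show a + b + 1 + 1 = a + 1 + b + 1 by ring]; exact hx)
        have h2 : y ^ p ^ (a + b) ∈ E := by
          rw [hm]
          apply hmemE
          rw [← hm, show a + b + 1 = a + 1 + b by ring]; exact hy
        have h3 := hEq.2 a b (x : G ⧸ E) (y : G ⧸ E) ((QuotientGroup.eq_one_iff _).mpr h1)
          ((QuotientGroup.eq_one_iff _).mpr h2)
        exact hEp c (mem_of_commute_mk (J := E) (a := w⁻¹) (b := v) h3.inv_left)
    set I := a + b + 1 with hI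
    have hcI : c ∈ pPowerSeries p G I :=
      hcomm (Subgroup.inv_mem _ (pow_mem_pPowerSeries p a x)) (pow_mem_pPowerSeries p b y)
    have hdI : ⁅c⁻¹, w⁻¹⁆ ∈ pPowerSeries p G (I + 1) :=
      commutator_mem_pPowerSeries_succ hp2 hG hpow (Subgroup.inv_mem _ hcI) _
    have hdp : ⁅c⁻¹, w⁻¹⁆ ^ p = 1 := by
      have := hord (i := 1) (y := c⁻¹) (by rw [pow_one, inv_pow, hcp, inv_one]) w⁻¹
      rwa [pow_one] at this
    have hdz : ∀ z : G, z ^ p ^ (I + 1) = 1 → Commute ⁅c⁻¹, w⁻¹⁆ z := by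
      intro z hz
      obtain ⟨f, hf⟩ := (mem_pPowerSeries_iff hp2 hG hpow).mp hdI
      have h1 := ih (I + 1) 0 (by omega) f z
        (by rw [Nat.add_zero, pow_succ, pow_mul, hf, hdp]) hz
      rwa [hf, pow_zero, pow_one] at h1
    have hcz : c ^ p ^ (I + 1) = 1 := by rw [pow_succ', pow_mul, hcp, one_pow]
    have hxz : x ^ p ^ (I + 1) = 1 := by
      rw [show I + 1 = a + 1 + b + 1 by omega]; exact hx
    have h1 := mul_pow_prime hp.out hp2 (x := w) (c := c) rfl ((hdz x hxz).pow_right _)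
      (hdz c hcz) hdp
    have h2 : w * c = v * w * v⁻¹ := by
      rw [hc]; simp only [commutatorElement_def]; group
    rw [hcp, mul_one, h2, conj_pow] at h1
    rw [pow_succ, pow_mul]
    exact (mul_inv_eq_iff_eq_mul.mp h1).symm

/-- The inductive step for `OrderControlled`. If `x ^ p = y ^ p = 1`, then the commutator of `x`
and `y` is the `p`-th power of an element of order dividing `p ^ 2`, hence commutes with both,
and `(x y) ^ p = 1`. Larger exponents are handled modulo `Ω₁(G)`. -/
theorem orderControlled_step (hp2 : p ≠ 2) (hG : IsPGroup p G)
    (hpow : commutator G ≤ subgroupPow ⊤ p) (hnc : ¬ ∀ a b : G, a * b = b * a)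
    (ihs : ∀ H : Subgroup G, H ≠ ⊤ → commutator H ≤ subgroupPow ⊤ p → OrderControlled p H)
    (ihq : ∀ N : Subgroup G, ∀ _ : N.Normal, N ≠ ⊥ → OrderControlled p (G ⧸ N)) :
    OrderControlled p G := by
  have h2 := commute_pow_step hp2 hG hpow hnc ihs ihq
  have h1 : ∀ x y : G, x ^ p ^ 1 = 1 → y ^ p ^ 1 = 1 → (x * y) ^ p ^ 1 = 1 := by
    intro x y hx hy
    have hyi : y⁻¹ ^ p ^ 1 = 1 := by rw [inv_pow, hy, inv_one]
    have hdp : ⁅y⁻¹, x⁻¹⁆ ^ p ^ 1 = 1 := commutator_pow_eq_one hp2 hG hpow hnc ihs hyi _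
    have hd : ⁅y⁻¹, x⁻¹⁆ ∈ pPowerSeries p G 1 :=
      commutator_mem_pPowerSeries_succ (n := 0) hp2 hG hpow (Subgroup.mem_top _) _
    obtain ⟨f, hf⟩ := (mem_pPowerSeries_iff hp2 hG hpow).mp hd
    have hc : ∀ z : G, z ^ p ^ 1 = 1 → Commute ⁅y⁻¹, x⁻¹⁆ z := by
      intro z hz
      have := h2 1 0 f z (by rw [Nat.add_zero, pow_add, pow_mul, hf, hdp]) hz
      rwa [hf, pow_zero, pow_one] at this
    have h3 := mul_pow_prime hp.out hp2 (x := x) (c := y) rfl (hc x hx) (hc y hy)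
      (by rwa [pow_one] at hdp)
    rw [pow_one] at hx hy ⊢
    rw [h3, hx, hy, one_mul]
  refine ⟨?_, h2⟩
  intro i x y hx hy
  rcases i with _ | i
  · rw [pow_zero, pow_one] at hx hy ⊢
    rw [hx, hy, one_mul]
  have htop : (⊤ : Subgroup G) ≠ ⊥ := by
    intro h
    apply hnc
    intro a b
    have := (Subgroup.eq_bot_iff_forall _).mp h
    rw [this a (Subgroup.mem_top a), this b (Subgroup.mem_top b)]
  have hq := ihq (omegaSubgroup p 1 ⊤) inferInstance (omegaSubgroup_one_ne_bot hG htop)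
  have hmem : ∀ z : G, z ^ p ^ (i + 1) = 1 → z ^ p ^ i ∈ omegaSubgroup p 1 (⊤ : Subgroup G) :=
    fun z hz => Subgroup.subset_closure ⟨Subgroup.mem_top _, by rw [← pow_mul, ← pow_add, hz]⟩
  have h3 := hq.1 i x y ((QuotientGroup.eq_one_iff _).mpr (hmem x hx))
    ((QuotientGroup.eq_one_iff _).mpr (hmem y hy))
  have h4 : (x * y) ^ p ^ i ∈ omegaSubgroup p 1 (⊤ : Subgroup G) :=
    (QuotientGroup.eq_one_iff _).mp h3
  have h5 := pow_eq_one_of_mem_omega h1 h4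
  rwa [← pow_mul, ← pow_add] at h5

end step

theorem orderControlled_of_powerful {p : ℕ} [hp : Fact p.Prime] (hp2 : p ≠ 2) (n : ℕ) :
    ∀ (G : Type*) [Group G] [Finite G], Nat.card G = n → IsPGroup p G →
      commutator G ≤ subgroupPow (⊤ : Subgroup G) p → OrderControlled p G := by
  induction n using Nat.strong_induction_on with
  | _ n ih =>
    intro G _ _ hn hG hpow
    by_cases hnc : ∀ a b : G, a * b = b * a
    · refine ⟨fun i x y hx hy => ?_, fun a b x y _ _ => hnc _ _⟩
      rw [Commute.mul_pow (hnc x y), hx, hy, one_mul]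
    · refine orderControlled_step hp2 hG hpow hnc ?_ ?_
      · intro H hH hHpow
        exact ih _ (hn ▸ card_subgroup_lt hH) H rfl (hG.to_subgroup H) hHpow
      · intro N _ hN
        exact ih _ (hn ▸ card_quotient_lt hN) (G ⧸ N) rfl (hG.to_quotient N)
          (powerful_quotient hpow N)

/-- If `x ^ (p ^ (a + b + n + 1)) = 1` and `y ^ (p ^ (a + b + n)) = 1`, then
`[x ^ (p ^ a), y ^ (p ^ b)]` has order dividing `p ^ n`: factor out `Ω₁(G)` repeatedly. -/
theorem commutator_pow_pow_eq_one {p : ℕ} [hp : Fact p.Prime] (hp2 : p ≠ 2) (a b n : ℕ) :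
    ∀ (G : Type*) [Group G] [Finite G], IsPGroup p G →
      commutator G ≤ subgroupPow (⊤ : Subgroup G) p → ∀ x y : G,
      x ^ p ^ (a + b + n + 1) = 1 → y ^ p ^ (a + b + n) = 1 →
      ⁅x ^ p ^ a, y ^ p ^ b⁆ ^ p ^ n = 1 := by
  induction n with
  | zero =>
    intro G _ _ hG hpow x y hx hy
    rw [pow_zero, pow_one, commutatorElement_eq_one_iff_commute]
    exact (orderControlled_of_powerful hp2 _ G rfl hG hpow).2 a b x y hx hy
  | succ n ih =>
    intro G _ _ hG hpow x y hx hy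
    have hmem : ∀ (k : ℕ) (z : G), z ^ p ^ (k + 1) = 1 →
        z ^ p ^ k ∈ omegaSubgroup p 1 (⊤ : Subgroup G) := fun k z hz =>
      Subgroup.subset_closure ⟨Subgroup.mem_top _, by rw [← pow_mul, ← pow_add, hz]⟩
    have h3 := ih (G ⧸ omegaSubgroup p 1 (⊤ : Subgroup G)) (hG.to_quotient _)
      (powerful_quotient hpow _) x y ((QuotientGroup.eq_one_iff _).mpr (hmem _ x hx))
      ((QuotientGroup.eq_one_iff _).mpr (hmem _ y hy))
    have h4 : ⁅x ^ p ^ a, y ^ p ^ b⁆ ^ p ^ n ∈ omegaSubgroup p 1 (⊤ : Subgroup G) :=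
      (QuotientGroup.eq_one_iff _).mp h3
    have h5 := pow_eq_one_of_mem_omega
      ((orderControlled_of_powerful hp2 _ G rfl hG hpow).1 1) h4
    rwa [← pow_mul, ← pow_add] at h5

/-! ### The powerfully central chain -/

/-- The chain of length `i` for `Ω_i(G ^ (p ^ j))`, as subgroups of `G`: trivial at `0`, and
`Ω_{min(m + 1, i)}(G ^ (p ^ (i - m + j)))` at `1 ≤ m ≤ i`. -/
def omegaChain (p : ℕ) (G : Type*) [Group G] (i j : ℕ) : ℕ → Subgroup G
  | 0 => ⊥
  | m + 1 => omegaSubgroup p (min (m + 2) i) (pPowerSeries p G (i - (m + 1) + j))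

theorem omegaSubgroup_mono {G : Type*} [Group G] {p a b : ℕ} {H K : Subgroup G} (hab : a ≤ b)
    (h : H ≤ K) : omegaSubgroup p a H ≤ omegaSubgroup p b K := by
  refine Subgroup.closure_mono ?_
  rintro x ⟨hx, hxp⟩
  obtain ⟨k, rfl⟩ := Nat.exists_eq_add_of_le hab
  exact ⟨h hx, by rw [pow_add, pow_mul, hxp, one_pow]⟩

theorem omegaChain_mono (p : ℕ) (G : Type*) [Group G] (i j m : ℕ) :
    omegaChain p G i j m ≤ omegaChain p G i j (m + 1) := by
  rcases m with _ | m
  · exact bot_le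
  · exact omegaSubgroup_mono (by omega) (pPowerSeries_antitone p G (by omega))

theorem omegaChain_le {p : ℕ} {G : Type*} [Group G] {i j m : ℕ} :
    omegaChain p G i j m ≤ omegaSubgroup p i (pPowerSeries p G j) := by
  rcases m with _ | m
  · exact bot_le
  · exact omegaSubgroup_mono (by omega) (pPowerSeries_antitone p G (by omega))

/-- The commutator of an element of the `(m + 1)`-st term of the chain with an element of
`Ω_i(G ^ (p ^ j))` is the `p`-th power of an element of the `m`-th term. -/
theorem omegaChain_commutator {p : ℕ} [hp : Fact p.Prime] (hp2 : p ≠ 2) {G : Type*} [Group G]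
    [Finite G] (hG : IsPGroup p G) (hpow : commutator G ≤ subgroupPow (⊤ : Subgroup G) p)
    {i j m : ℕ} (hj : 1 ≤ j) (hm : m < i) {x y : G} (hx : x ∈ omegaChain p G i j (m + 1))
    (hy : y ∈ omegaSubgroup p i (pPowerSeries p G j)) :
    ∃ z ∈ omegaChain p G i j m, z ^ p = ⁅x, y⁆ := by
  have hord := (orderControlled_of_powerful hp2 _ G rfl hG hpow).1
  have hxD := omegaSubgroup_le _ _ _ hx
  have hyD := omegaSubgroup_le _ _ _ hy
  have hxp : x ^ p ^ (m + 2) = 1 := by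
    obtain ⟨k, hk⟩ := Nat.exists_eq_add_of_le (Nat.min_le_left (m + 2) i)
    rw [hk, pow_add, pow_mul, pow_eq_one_of_mem_omega (hord _) hx, one_pow]
  have hyp : y ^ p ^ i = 1 := pow_eq_one_of_mem_omega (hord _) hy
  have hcomm : ⁅x, y⁆ ^ p ^ m = 1 := by
    obtain ⟨h, hh⟩ := (mem_pPowerSeries_iff hp2 hG hpow).mp hxD
    obtain ⟨g, hg⟩ := (mem_pPowerSeries_iff hp2 hG hpow).mp hyD
    -- Only one factor `p` of the exponent `p ^ j` of `y` is used; the rest is absorbed into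
    -- the two roots.
    have ex : x = (h ^ p ^ (j - 1)) ^ p ^ (i - m) := by
      rw [← pow_mul, ← pow_add, ← hh]
      congr 2; omega
    have ey : y = (g ^ p ^ (j - 1)) ^ p ^ 1 := by
      rw [← pow_mul, ← pow_add, ← hg]
      congr 2; omega
    have hxr : (h ^ p ^ (j - 1)) ^ p ^ (i - m + 1 + m + 1) = 1 := by
      rw [show i - m + 1 + m + 1 = (i - m) + (m + 2) by omega, pow_add p (i - m),
        pow_mul, ← ex, hxp]
    have hyr : (g ^ p ^ (j - 1)) ^ p ^ (i - m + 1 + m) = 1 := by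
      rw [show i - m + 1 + m = 1 + i by omega, pow_add p 1, pow_mul, ← ey, hyp]
    rw [ex, ey]
    exact commutator_pow_pow_eq_one hp2 (i - m) 1 m G hG hpow _ _ hxr hyr
  rcases m with _ | m
  · refine ⟨1, Subgroup.one_mem _, ?_⟩
    rw [pow_zero, pow_one] at hcomm
    rw [hcomm, one_pow]
  have hmem : ⁅x, y⁆ ∈ pPowerSeries p G (i - (m + 1) + j + 1) :=
    pPowerSeries_antitone p G (by omega) (commutator_pPowerSeries hp2 hG hpow _ _
      (Subgroup.commutator_mem_commutator hxD hyD))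
  obtain ⟨z, hz, hzp⟩ := exists_pow_eq hp2 hG hpow hmem
  refine ⟨z, Subgroup.subset_closure ⟨hz, ?_⟩, hzp⟩
  rw [Nat.min_eq_left (by omega), show m + 2 = 1 + (m + 1) by ring, pow_add, pow_mul, pow_one,
    hzp, hcomm]

theorem isPowerfullyCentralChain_omegaChain {p : ℕ} [hp : Fact p.Prime] (hp2 : p ≠ 2)
    {G : Type*} [Group G] [Finite G] (hG : IsPGroup p G)
    (hpow : commutator G ≤ subgroupPow (⊤ : Subgroup G) p) {i j : ℕ} (hi : 1 ≤ i) (hj : 1 ≤ j) :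
    IsPowerfullyCentralChain p i fun m =>
      (omegaChain p G i j m).subgroupOf (omegaSubgroup p i (pPowerSeries p G j)) := by
  refine ⟨Subgroup.bot_subgroupOf _, ?_, fun m _ => ?_, fun m hm => ?_⟩
  · rw [Subgroup.subgroupOf_eq_top]
    obtain ⟨k, rfl⟩ := Nat.exists_eq_add_of_le' hi
    exact omegaSubgroup_mono (by omega) (pPowerSeries_antitone p G (by omega))
  · exact Subgroup.comap_mono (omegaChain_mono p G i j m)
  · rw [Subgroup.commutator_le]
    intro x hx y _
    obtain ⟨z, hz, hzp⟩ := omegaChain_commutator hp2 hG hpow hj hm hx y.2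
    have e : (⟨z, omegaChain_le hz⟩ : omegaSubgroup p i (pPowerSeries p G j)) ^ p = ⁅x, y⁆ :=
      Subtype.ext hzp
    rw [← e]
    exact pow_mem_subgroupPow p hz


theorem omega_statement_11 (p : ℕ) (hp : p.Prime) (hp2 : p ≠ 2) (G : Type*) [Group G]
    [Finite G] (hG : IsPGroup p G) (hpow : IsPowerful p G) (i j : ℕ) (hi : 1 ≤ i)
    (hj : 1 ≤ j) :
    IsPowerfullyNilpotent p ↥(omegaSubgroup p i (subgroupPow (⊤ : Subgroup G) (p ^ j))) ∧
      powerfulNilpotencyClass p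
        ↥(omegaSubgroup p i (subgroupPow (⊤ : Subgroup G) (p ^ j))) ≤ i := by
  have : Fact p.Prime := ⟨hp⟩
  rw [IsPowerful, if_neg hp2] at hpow
  rw [subgroupPow_eq_powerSeries hp2 hG hpow j]
  have hchain := isPowerfullyCentralChain_omegaChain hp2 hG hpow hi hj
  refine ⟨⟨?_, i, _, hchain⟩, Nat.sInf_le ⟨_, hchain⟩⟩
  -- Powerfulness is the last step of the chain.
  rw [IsPowerful, if_neg hp2, commutator_def]
  obtain ⟨-, htop, -, hstep⟩ := hchain
  have h1 := hstep (i - 1) (by omega)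
  rw [Nat.sub_add_cancel hi, htop] at h1
  exact h1.trans (subgroupPow_mono le_top p)
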